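/- arXiv:2102.12958 — 7 statements merged into one kernel-verified Lean document; each statement's English description precedes it below -/
import Mathlib

section
/- Let d ≥ 1 and let U : ℂ → Matrix (Fin d) (Fin d) ℂ be a matrix-valued function such that each entry function ε ↦ (U ε) i j is meromorphic at 0. Suppose there exists δ > 0 such that for every real ε with 0 < ε < δ the matrix U ε is unitary. Then there exists V : ℂ → Matrix (Fin d) (Fin d) ℂ such that each entry of V is analytic at 0 and V ε = U ε for all ε in some punctured neighborhood of 0 in ℂ. -/
open Matrix Filter Topology

/-!
The entries of a unitary matrix are bounded by `1`, while a meromorphic function tends to infinity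
in norm at a pole. So an entry of `U` has no pole at `0` as soon as `U` is unitary at points
accumulating at `0`, and its singularity there is removable.
-/

section RemovableSingularity

variable {𝕜 E : Type*} [NontriviallyNormedField 𝕜] [NormedAddCommGroup E] [NormedSpace 𝕜 E]
  {f : 𝕜 → E} {z₀ : 𝕜} {s : Set E}

theorem meromorphicOrderAt_nonneg_of_frequently_mem_isBounded (hs : Bornology.IsBounded s)
    (hfs : ∃ᶠ z in 𝓝[≠] z₀, f z ∈ s) : 0 ≤ meromorphicOrderAt f z₀ := by
  by_contra! hpole
  have hescape : ∀ᶠ z in 𝓝[≠] z₀, f z ∈ sᶜ :=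
    (tendsto_cobounded_of_meromorphicOrderAt_neg hpole).eventually_mem
      (Bornology.isBounded_def.1 hs)
  exact hfs hescape

theorem exists_analyticAt_eventuallyEq_of_frequently_mem_isBounded (hf : MeromorphicAt f z₀)
    (hs : Bornology.IsBounded s) (hfs : ∃ᶠ z in 𝓝[≠] z₀, f z ∈ s) :
    ∃ g : 𝕜 → E, AnalyticAt 𝕜 g z₀ ∧ f =ᶠ[𝓝[≠] z₀] g :=
  hf.meromorphicOrderAt_nonneg_iff.1
    (meromorphicOrderAt_nonneg_of_frequently_mem_isBounded hs hfs)

end RemovableSingularity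

theorem tendsto_complex_ofReal_nhdsNE (a : ℝ) :
    Tendsto ((↑) : ℝ → ℂ) (𝓝[≠] a) (𝓝[≠] (a : ℂ)) :=
  Complex.continuous_ofReal.continuousWithinAt.tendsto_nhdsWithin fun _ hx ↦
    Complex.ofReal_injective.ne hx

theorem frequently_nhdsNE_of_forall_ofReal_mem_Ioo {p : ℂ → Prop} {a b : ℝ} (hab : a < b)
    (hp : ∀ x ∈ Set.Ioo a b, p x) : ∃ᶠ z in 𝓝[≠] (a : ℂ), p z :=
  (tendsto_complex_ofReal_nhdsNE a).frequently <|
    (eventually_of_mem (Ioo_mem_nhdsGT hab) hp).frequently.filter_mono (nhdsGT_le_nhdsNE a)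

theorem stmt3_general {𝕜 𝕂 n : Type*} [NontriviallyNormedField 𝕜] [RCLike 𝕂] [NormedSpace 𝕜 𝕂]
    [Fintype n] [DecidableEq n] {z₀ : 𝕜} {U : 𝕜 → Matrix n n 𝕂}
    (hmero : ∀ i j, MeromorphicAt (fun z ↦ U z i j) z₀)
    (hunit : ∃ᶠ z in 𝓝[≠] z₀, U z ∈ unitaryGroup n 𝕂) :
    ∃ V : 𝕜 → Matrix n n 𝕂,
      (∀ i j, AnalyticAt 𝕜 (fun z ↦ V z i j) z₀) ∧ ∀ᶠ z in 𝓝[≠] z₀, V z = U z := by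
  have hbound (i j : n) : ∃ᶠ z in 𝓝[≠] z₀, U z i j ∈ Metric.closedBall 0 1 :=
    hunit.mono fun z hz ↦ mem_closedBall_zero_iff.2 (entry_norm_bound_of_unitary hz i j)
  choose V hV hUV using fun i j ↦ exists_analyticAt_eventuallyEq_of_frequently_mem_isBounded
    (hmero i j) Metric.isBounded_closedBall (hbound i j)
  refine ⟨fun z ↦ of fun i j ↦ V i j z, hV, ?_⟩
  filter_upwards [eventually_all.2 fun i ↦ eventually_all.2 (hUV i)] with z hz
  ext i j
  exact (hz i j).symm

theorem stmt3 (d : ℕ) (hd : 1 ≤ d) (U : ℂ → Matrix (Fin d) (Fin d) ℂ)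
    (hmero : ∀ i j : Fin d, MeromorphicAt (fun ε => U ε i j) 0)
    (hunit : ∃ δ : ℝ, 0 < δ ∧ ∀ ε : ℝ, 0 < ε → ε < δ →
      (U ε)ᴴ * U ε = 1 ∧ U ε * (U ε)ᴴ = 1) :
    ∃ V : ℂ → Matrix (Fin d) (Fin d) ℂ,
      (∀ i j : Fin d, AnalyticAt ℂ (fun ε => V ε i j) 0) ∧
      ∀ᶠ ε in 𝓝[≠] (0 : ℂ), V ε = U ε := by
  obtain ⟨δ, hδ, hU⟩ := hunit
  exact stmt3_general hmero <| Complex.ofReal_zero ▸ frequently_nhdsNE_of_forall_ofReal_mem_Ioo hδ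
    fun ε hε ↦ mem_unitaryGroup_iff.2 (hU ε hε.1 hε.2).2
end

section
/- Let U be a unitary d×d complex matrix and P a d×d complex matrix with P * P = P, Pᴴ = P, and U * P = P * U. Assume U − 1 is invertible. Then the matrix K := −i·(U − 1)⁻¹ * P * (U + 1) is Hermitian. -/
open Matrix

/-!
For a unitary `u` with `a := u - 1` invertible, expanding `a * star a` with `u * star u = 1` gives
`a * star a = -(a + star a)`. Dividing by `a` and `star a` yields `a⁻¹ + star a⁻¹ = -1`: the
"real part" of `(u - 1)⁻¹` is `-1/2`. Hence the Cayley transform `(u - 1)⁻¹ (u + 1) = 1 + 2 a⁻¹` is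
skew-adjoint, and so is its product with a self-adjoint element commuting with `u`; a skew-adjoint
scalar such as `-i` makes that product self-adjoint.
-/

open scoped Ring

theorem commute_ringInverse_right {M₀ : Type*} [MonoidWithZero M₀] {a b : M₀}
    (h : Commute a b) : Commute a b⁻¹ʳ := by
  by_cases hb : IsUnit b
  · obtain ⟨b, rfl⟩ := hb
    rw [Ring.inverse_unit]
    exact h.units_inv_right
  · rw [Ring.inverse_non_unit b hb]
    exact Commute.zero_right a

theorem mul_mem_skewAdjoint_of_commute {A : Type*} [NonUnitalNonAssocRing A] [StarRing A]
    {p c : A}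
    (hp : IsSelfAdjoint p) (hc : c ∈ skewAdjoint A) (hpc : Commute p c) :
    p * c ∈ skewAdjoint A := by
  rw [skewAdjoint.mem_iff] at hc ⊢
  rw [star_mul, hc, hp.star_eq, neg_mul, hpc.eq]

/-- The Cayley transform `(u - 1)⁻¹ (u + 1)`, which turns unitary elements into skew-adjoint ones.
It is encoded with `Ring.inverse`, so it takes the junk value `0` if `u - 1` is not invertible. -/
noncomputable def cayleyTransform {A : Type*} [Ring A] (u : A) : A :=
  (u - 1)⁻¹ʳ * (u + 1)

section Ring

variable {A : Type*} [Ring A] {u p : A}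

theorem cayleyTransform_eq_one_add (hu : IsUnit (u - 1)) :
    cayleyTransform u = 1 + 2 * (u - 1)⁻¹ʳ := by
  have hadd : u + 1 = (u - 1) + 2 := by rw [← one_add_one_eq_two]; abel
  rw [cayleyTransform, hadd, mul_add, Ring.inverse_mul_cancel _ hu, (Commute.ofNat_right _ 2).eq]

theorem commute_ringInverse_sub_one (h : Commute p u) : Commute p (u - 1)⁻¹ʳ :=
  commute_ringInverse_right (h.sub_right (Commute.one_right p))

theorem commute_cayleyTransform (h : Commute p u) : Commute p (cayleyTransform u) :=
  (commute_ringInverse_sub_one h).mul_right (h.add_right (Commute.one_right p))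

theorem ringInverse_mul_mul_eq_mul_cayleyTransform (h : Commute p u) :
    (u - 1)⁻¹ʳ * p * (u + 1) = p * cayleyTransform u := by
  rw [cayleyTransform, ← (commute_ringInverse_sub_one h).eq, mul_assoc]

variable [StarRing A]

theorem sub_one_mul_star_sub_one (hu : u * star u = 1) :
    (u - 1) * star (u - 1) = -((u - 1) + star (u - 1)) := by
  simp only [star_sub, star_one, sub_mul, mul_sub, hu, mul_one, one_mul]
  abel

theorem ringInverse_sub_one_add_star (hu : u ∈ unitary A) (hinv : IsUnit (u - 1)) :
    (u - 1)⁻¹ʳ + star (u - 1)⁻¹ʳ = -1 := by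
  have hstar : IsUnit (star (u - 1)) := hinv.star
  have hadd : (u - 1) + star (u - 1) = -((u - 1) * star (u - 1)) := by
    rw [sub_one_mul_star_sub_one (Unitary.mul_star_self_of_mem hu), neg_neg]
  calc (u - 1)⁻¹ʳ + star (u - 1)⁻¹ʳ
      = (u - 1)⁻¹ʳ * ((u - 1) + star (u - 1)) * (star (u - 1))⁻¹ʳ := by
        rw [← Ring.inverse_star, Ring.inverse_add_inverse (iff_of_true hinv hstar)]
    _ = -((u - 1)⁻¹ʳ * ((u - 1) * star (u - 1)) * (star (u - 1))⁻¹ʳ) := by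
        rw [hadd, mul_neg, neg_mul]
    _ = -1 := by
        rw [Ring.inverse_mul_cancel_left _ _ hinv, Ring.mul_inverse_cancel _ hstar]

theorem cayleyTransform_mem_skewAdjoint (hu : u ∈ unitary A) (hinv : IsUnit (u - 1)) :
    cayleyTransform u ∈ skewAdjoint A := by
  rw [skewAdjoint.mem_iff, cayleyTransform_eq_one_add hinv]
  have hstar : star (u - 1)⁻¹ʳ = -1 - (u - 1)⁻¹ʳ :=
    eq_sub_of_add_eq' (ringInverse_sub_one_add_star hu hinv)
  rw [star_add, star_one, star_mul, star_ofNat, hstar]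
  noncomm_ring

theorem stmt4_general {R : Type*} [Ring R] [StarRing R] [Module R A] [StarModule R A] {r : R}
    (hr : r ∈ skewAdjoint R) (hu : u ∈ unitary A) (hp : IsSelfAdjoint p) (hup : Commute u p)
    (hinv : IsUnit (u - 1)) :
    IsSelfAdjoint (r • ((u - 1)⁻¹ʳ * p * (u + 1))) := by
  rw [ringInverse_mul_mul_eq_mul_cayleyTransform hup.symm]
  exact isSelfAdjoint_smul_of_mem_skewAdjoint hr <|
    mul_mem_skewAdjoint_of_commute hp (cayleyTransform_mem_skewAdjoint hu hinv)
      (commute_cayleyTransform hup.symm)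

end Ring

theorem stmt4 (d : ℕ) (U P : Matrix (Fin d) (Fin d) ℂ)
    (hU : Uᴴ * U = 1 ∧ U * Uᴴ = 1)
    (hP2 : P * P = P) (hPh : Pᴴ = P) (hUP : U * P = P * U)
    (hinv : IsUnit (U - 1)) :
    ((-Complex.I) • ((U - 1)⁻¹ * P * (U + 1))).IsHermitian := by
  rw [nonsing_inv_eq_ringInverse]
  exact stmt4_general (neg_mem Complex.I_mem_skewAdjoint) hU hPh hUP hinv
end

section
/- Let U be a unitary d×d complex matrix and P a d×d complex matrix with P * P = P, Pᴴ = P, and U * P = P * U. Assume both U − 1 and U + 1 are invertible, and set K := −i·(U − 1)⁻¹ * P * (U + 1) and K⊥ := i·(U + 1)⁻¹ * (1 − P) * (U − 1). Then for all vectors x, v ∈ ℂ^d: i·((U − 1).mulVec x) + (U + 1).mulVec v = 0 if and only if both P.mulVec x + K.mulVec v = 0 and (1 − P).mulVec v + K⊥.mulVec x = 0. -/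
open Matrix

/-!
With `w = i (U - 1) x + (U + 1) v`, commutation of `P` with `U` lets one pull the inverses out of
`K` and `K⊥`: the left-hand sides of the two equations become `-i (U - 1)⁻¹ P w` and
`(U + 1)⁻¹ (1 - P) w`. The inverses are injective, so the two equations say `P w = 0` and
`(1 - P) w = 0`, and these add up to `w = 0`.
-/

section Module

variable {R M : Type*} [Ring R] [AddCommGroup M] [Module R M]

theorem smul_eq_zero_and_one_sub_smul_eq_zero_iff {p : R} {w : M} :
    p • w = 0 ∧ (1 - p) • w = 0 ↔ w = 0 := by
  refine ⟨fun ⟨hp, hq⟩ ↦ ?_, fun hw ↦ by simp [hw]⟩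
  calc w = p • w + (1 - p) • w := smul_add_one_sub_smul.symm
    _ = 0 := by rw [hp, hq, add_zero]

theorem smul_add_inv_mul_mul_smul_of_commute {p : R} {a : Rˣ} (h : Commute p a) (b : R)
    (x v : M) :
    p • x + ((↑a⁻¹ : R) * p * b) • v = (↑a⁻¹ : R) • p • ((a : R) • x + b • v) := by
  have hconj : (↑a⁻¹ : R) * p * a = p := by rw [mul_assoc, h.eq, Units.inv_mul_cancel_left]
  simp only [smul_add, smul_smul, ← mul_assoc, hconj]

theorem smul_add_smul_eq_zero_iff_of_commute {p : R} {a b : Rˣ} (ha : Commute p a)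
    (hb : Commute p b) (x v : M) :
    (a : R) • x + (b : R) • v = 0 ↔
      p • x + ((↑a⁻¹ : R) * p * b) • v = 0 ∧
        (1 - p) • v + ((↑b⁻¹ : R) * (1 - p) * a) • x = 0 := by
  have hb' : Commute (1 - p) (b : R) := (Commute.one_left _).sub_left hb
  rw [smul_add_inv_mul_mul_smul_of_commute ha, smul_add_inv_mul_mul_smul_of_commute hb',
    add_comm ((b : R) • v), a⁻¹.isUnit.smul_eq_zero, b⁻¹.isUnit.smul_eq_zero,
    smul_eq_zero_and_one_sub_smul_eq_zero_iff]

end Module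

theorem stmt6_general {n R : Type*} [Fintype n] [DecidableEq n] [CommRing R]
    {A B P : Matrix n n R} (hA : IsUnit A) (hB : IsUnit B) (hPA : Commute P A)
    (hPB : Commute P B) (c : Rˣ) (x v : n → R) :
    c • (A *ᵥ x) + B *ᵥ v = 0 ↔
      P *ᵥ x + (c⁻¹ • (A⁻¹ * P * B)) *ᵥ v = 0 ∧
        (1 - P) *ᵥ v + (c • (B⁻¹ * (1 - P) * A)) *ᵥ x = 0 := by
  obtain ⟨a, rfl⟩ := hA
  obtain ⟨b, rfl⟩ := hB
  have hca : Commute P ↑(c • a) := hPA.smul_right c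
  have h := smul_add_smul_eq_zero_iff_of_commute hca hPB x v
  rw [Units.smul_inv, Units.val_smul, Units.val_smul, coe_units_inv, coe_units_inv,
    smul_mul_assoc, smul_mul_assoc, mul_smul_comm] at h
  rwa [← smul_mulVec]

theorem stmt6 (d : ℕ) (U P : Matrix (Fin d) (Fin d) ℂ)
    (hU : Uᴴ * U = 1 ∧ U * Uᴴ = 1)
    (hP2 : P * P = P) (hPh : Pᴴ = P) (hUP : U * P = P * U)
    (hinv₁ : IsUnit (U - 1)) (hinv₂ : IsUnit (U + 1)) :
    ∀ x v : Fin d → ℂ,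
      Complex.I • ((U - 1).mulVec x) + (U + 1).mulVec v = 0 ↔
        (P.mulVec x + ((-Complex.I) • ((U - 1)⁻¹ * P * (U + 1))).mulVec v = 0 ∧
         (1 - P).mulVec v + (Complex.I • ((U + 1)⁻¹ * (1 - P) * (U - 1))).mulVec x = 0) := by
  have hPU : Commute P U := hUP.symm
  rw [← Complex.inv_I]
  exact stmt6_general hinv₁ hinv₂ (hPU.sub_right (.one_right P)) (hPU.add_right (.one_right P))
    (Units.mk0 Complex.I Complex.I_ne_zero)
end

section
/- Let P : ℝ → Matrix (Fin d) (Fin d) ℂ be differentiable at 0 and such that for all ε in some neighborhood of 0 one has P ε * P ε = P ε and (P ε)ᴴ = P ε. Set P₀ := P 0 and P₁ := deriv P 0, and for ε ∈ ℝ define S ε := (P ε * P₀ + (1 − P ε) * (1 − P₀))⁻¹ * sqrt(1 − (P ε − P₀)^2), where sqrt denotes the matrix square root (via the continuous functional calculus, agreeing with the positive semidefinite square root). Then S 0 = 1 and S has derivative P₁ * (1 − P₀) − P₁ * P₀ at 0; moreover this derivative also equals P₁ * (1 − P₀) − (1 − P₀) * P₁. -/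
open Matrix Filter Topology

/-- The matrix square root, via the continuous functional calculus. For a positive
semidefinite matrix this is its unique positive semidefinite square root. -/
noncomputable def matSqrt {d : ℕ} (M : Matrix (Fin d) (Fin d) ℂ) :
    Matrix (Fin d) (Fin d) ℂ :=
  cfc Real.sqrt M

attribute [local instance] Matrix.normedAddCommGroup Matrix.normedSpace

/-
Write `q = P t` and `w s = P s * q + (1 - P s) * (1 - q)`, so that `w t = 1`. The operator
`1 - (P s - q) ^ 2` is `1` up to second order, and `‖√a - 1‖ ≤ ‖a - 1‖` for self-adjoint `a`, so
the square root is stationary at `t`. Inversion near `1` negates derivatives, so the whole product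
has derivative `-w' t = P' * (1 - q) - P' * q`. Differentiating `P s * P s = P s` gives
`P' * q = (1 - q) * P'`, which is the second form of the derivative.
-/

section Derivatives

variable {𝕜 A : Type*} [NontriviallyNormedField 𝕜] [NormedRing A] [NormedAlgebra 𝕜 A]
  {f : 𝕜 → A} {f' : A} {t : 𝕜}

lemma hasDerivAt_ringInverse_comp [HasSummableGeomSeries A] (hf : HasDerivAt f f' t)
    (hunit : IsUnit (f t)) :
    HasDerivAt (fun s => Ring.inverse (f s))
      (-(Ring.inverse (f t) * f' * Ring.inverse (f t))) t := by
  obtain ⟨u, hu⟩ := hunit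
  simpa [← hu, Function.comp_def] using
    (hasFDerivAt_ringInverse (𝕜 := 𝕜) u).comp_hasDerivAt_of_eq t hf hu

lemma hasDerivAt_sub_self_sq (hf : HasDerivAt f f' t) :
    HasDerivAt (fun s => (f s - f t) ^ 2) 0 t := by
  simpa [pow_two] using! (hf.sub_const (f t)).mul (hf.sub_const (f t))

lemma mul_eq_one_sub_mul_of_hasDerivAt (hf : HasDerivAt f f' t)
    (hidem : ∀ᶠ s in 𝓝 t, IsIdempotentElem (f s)) : f' * f t = (1 - f t) * f' := by
  have hsq : HasDerivAt f (f' * f t + f t * f') t :=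
    (hf.mul hf).congr_of_eventuallyEq (hidem.mono fun _ hs => hs.eq.symm)
  rw [sub_mul, one_mul]
  exact eq_sub_of_add_eq (hsq.unique hf)

end Derivatives

section SquareRoot

lemma abs_sqrt_sub_one_le (x : ℝ) : |√x - 1| ≤ |x - 1| := by
  rcases le_total 0 x with hx | hx
  · have hfactor : x - 1 = (√x - 1) * (√x + 1) := by
      linear_combination -Real.sq_sqrt hx
    have hone : 1 ≤ |√x + 1| :=
      (le_add_of_nonneg_left (Real.sqrt_nonneg x)).trans (le_abs_self _)
    rw [hfactor, abs_mul]
    exact le_mul_of_one_le_right (abs_nonneg _) hone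
  · rw [Real.sqrt_eq_zero_of_nonpos hx, abs_of_nonpos (by norm_num), abs_of_nonpos (by linarith)]
    linarith

variable {𝕜 A : Type*} [NontriviallyNormedField 𝕜] [NormedRing A] [StarRing A] [NormedAlgebra ℝ A]
  [IsometricContinuousFunctionalCalculus ℝ A IsSelfAdjoint]

lemma norm_cfc_sqrt_sub_one_le {a : A} (ha : IsSelfAdjoint a) :
    ‖cfc Real.sqrt a - 1‖ ≤ ‖a - 1‖ := by
  have hsqrt : cfc Real.sqrt a - 1 = cfc (fun x => √x - 1) a := by
    rw [cfc_sub (fun x => √x) (fun _ => 1) a, cfc_const_one ℝ a]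
  have hid : a - 1 = cfc (fun x : ℝ => x - 1) a := by
    rw [cfc_sub (fun x => x) (fun _ => 1) a, cfc_const_one ℝ a, cfc_id' ℝ a]
  rw [hsqrt, hid]
  exact norm_cfc_le (norm_nonneg _) fun x hx =>
    (abs_sqrt_sub_one_le x).trans (norm_apply_le_norm_cfc (fun x : ℝ => x - 1) a hx)

lemma hasDerivAt_cfc_sqrt_of_eq_one [NormedSpace 𝕜 A] {f : 𝕜 → A} {t : 𝕜}
    (hf : HasDerivAt f 0 t) (hone : f t = 1) (hsa : ∀ᶠ s in 𝓝 t, IsSelfAdjoint (f s)) :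
    HasDerivAt (fun s => cfc Real.sqrt (f s)) 0 t := by
  have hlittle : (fun s => f s - 1) =o[𝓝 t] fun s => s - t := by
    simpa [hasDerivAt_iff_isLittleO, hone] using hf
  have hbig : (fun s => cfc Real.sqrt (f s) - 1) =O[𝓝 t] fun s => f s - 1 :=
    (Asymptotics.IsBigO.of_norm_eventuallyLE
      (hsa.mono fun _ hs => norm_cfc_sqrt_sub_one_le hs)).of_norm_right
  simpa [hasDerivAt_iff_isLittleO, hone] using hbig.trans_isLittleO hlittle

end SquareRoot

section DirectRotation

/-- The direct rotation (of Sz.-Nagy, Kato and Davis) from the range of a projection `p` to the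
range of a projection `q`: a unitary conjugating `p` into `q`, for `p` and `q` close. As
`Ring.inverse` is `0` off the units, it is meaningful only if `p * q + (1 - p) * (1 - q)` is
invertible. -/
noncomputable def directRotation {A : Type*} [Ring A] [StarRing A] [TopologicalSpace A]
    [Algebra ℝ A] [ContinuousFunctionalCalculus ℝ A IsSelfAdjoint] (p q : A) : A :=
  Ring.inverse (p * q + (1 - p) * (1 - q)) * cfc Real.sqrt (1 - (p - q) ^ 2)

lemma nonsing_inv_mul_matSqrt_eq_directRotation {d : ℕ} (p q : Matrix (Fin d) (Fin d) ℂ) :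
    (p * q + (1 - p) * (1 - q))⁻¹ * matSqrt (1 - (p - q) ^ 2) = directRotation p q := by
  rw [nonsing_inv_eq_ringInverse, matSqrt, directRotation]

lemma mul_self_add_one_sub_mul_self {A : Type*} [Ring A] {p : A} (hp : IsIdempotentElem p) :
    p * p + (1 - p) * (1 - p) = 1 := by
  rw [hp.eq, hp.one_sub.eq, add_sub_cancel]

lemma directRotation_self {A : Type*} [Ring A] [StarRing A] [TopologicalSpace A]
    [Algebra ℝ A] [ContinuousFunctionalCalculus ℝ A IsSelfAdjoint] {p : A}
    (hp : IsIdempotentElem p) : directRotation p p = 1 := by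
  simp [directRotation, mul_self_add_one_sub_mul_self hp]

variable {𝕜 A : Type*} [NontriviallyNormedField 𝕜] [NormedRing A] [StarRing A]
  [NormedAlgebra 𝕜 A] [NormedAlgebra ℝ A]
  [IsometricContinuousFunctionalCalculus ℝ A IsSelfAdjoint]
  {P : 𝕜 → A} {P' : A} {t : 𝕜}

lemma hasDerivAt_cfc_sqrt_one_sub_sq (hd : HasDerivAt P P' t)
    (hP : ∀ᶠ s in 𝓝 t, IsSelfAdjoint (P s)) :
    HasDerivAt (fun s => cfc Real.sqrt (1 - (P s - P t) ^ 2)) 0 t := by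
  refine hasDerivAt_cfc_sqrt_of_eq_one (by simpa using (hasDerivAt_sub_self_sq hd).const_sub 1)
    (by simp) ?_
  filter_upwards [hP] with s hs
  exact (IsSelfAdjoint.one A).sub ((hs.sub hP.self_of_nhds).pow 2)

lemma hasDerivAt_directRotation [HasSummableGeomSeries A] (hd : HasDerivAt P P' t)
    (hP : ∀ᶠ s in 𝓝 t, IsStarProjection (P s)) :
    HasDerivAt (fun s => directRotation (P s) (P t)) (P' * (1 - P t) - P' * P t) t := by
  have hone := mul_self_add_one_sub_mul_self hP.self_of_nhds.isIdempotentElem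
  have hw : HasDerivAt (fun s => P s * P t + (1 - P s) * (1 - P t))
      (P' * P t + -P' * (1 - P t)) t :=
    (hd.mul_const _).add ((hd.const_sub 1).mul_const _)
  have hinv := hasDerivAt_ringInverse_comp hw (by simp [hone])
  have hsqrt := hasDerivAt_cfc_sqrt_one_sub_sq hd (hP.mono fun _ hs => hs.isSelfAdjoint)
  refine (hinv.mul hsqrt).congr_deriv ?_
  simp only [hone, Ring.inverse_one, sub_self, ne_eq, OfNat.ofNat_ne_zero, not_false_eq_true,
    zero_pow, sub_zero, cfc_apply_one, Real.sqrt_one, map_one, one_mul, mul_one, mul_zero, add_zero]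
  noncomm_ring

theorem stmt8_general [HasSummableGeomSeries A] (hd : HasDerivAt P P' t)
    (hP : ∀ᶠ s in 𝓝 t, IsStarProjection (P s)) :
    directRotation (P t) (P t) = 1 ∧
    HasDerivAt (fun s => directRotation (P s) (P t)) (P' * (1 - P t) - P' * P t) t ∧
    P' * (1 - P t) - P' * P t = P' * (1 - P t) - (1 - P t) * P' :=
  ⟨directRotation_self hP.self_of_nhds.isIdempotentElem, hasDerivAt_directRotation hd hP,
    congrArg _ (mul_eq_one_sub_mul_of_hasDerivAt hd (hP.mono fun _ hs => hs.isIdempotentElem))⟩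

end DirectRotation

theorem stmt8 (d : ℕ) (P : ℝ → Matrix (Fin d) (Fin d) ℂ)
    (hdiff : DifferentiableAt ℝ P 0)
    (hP : ∀ᶠ ε in 𝓝 (0 : ℝ), P ε * P ε = P ε ∧ (P ε)ᴴ = P ε)
    (S : ℝ → Matrix (Fin d) (Fin d) ℂ)
    (hS : ∀ ε : ℝ, S ε = (P ε * P 0 + (1 - P ε) * (1 - P 0))⁻¹ *
      matSqrt (1 - (P ε - P 0) ^ 2)) :
    S 0 = 1 ∧
    HasDerivAt S (deriv P 0 * (1 - P 0) - deriv P 0 * P 0) 0 ∧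
    deriv P 0 * (1 - P 0) - deriv P 0 * P 0 =
      deriv P 0 * (1 - P 0) - (1 - P 0) * deriv P 0 := by
  obtain rfl : S = fun ε => directRotation (P ε) (P 0) :=
    funext fun ε => (hS ε).trans (nonsing_inv_mul_matSqrt_eq_directRotation _ _)
  open scoped Matrix.Norms.L2Operator in
  exact stmt8_general hdiff.hasDerivAt (hP.mono fun _ hε => ⟨hε.1, hε.2⟩)
end

section
/- Let U, P : ℝ → Matrix (Fin d) (Fin d) ℂ both be differentiable at 0 and such that for all ε in some neighborhood of 0: U ε is unitary, P ε * P ε = P ε, (P ε)ᴴ = P ε, U ε * P ε = P ε * U ε, and U ε − 1 is invertible. Assume moreover U 0 * P 0 = −P 0. Define K ε := −i·(U ε − 1)⁻¹ * P ε * (U ε + 1). Then K 0 = 0, K is differentiable at 0, and P 0 * (deriv K 0) * (1 − P 0) = 0. -/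
open Matrix Filter Topology

attribute [local instance] Matrix.normedAddCommGroup Matrix.normedSpace

/-!
Since `P` is idempotent and commutes with `U`, the right factor `P` is absorbed: `K = K P` near the
base point. Differentiating gives `K' = K' P + K P'`, and the last term vanishes because `K` does:
there `U` acts as `-1` on the range of `P`, which the factor `U + 1` annihilates.
-/

/-- The Cayley transform `-i (u - 1)⁻¹ (u + 1)` cut down by an element `p`, which in applications is
a spectral projection of `u`. As `Ring.inverse` is used, the value is `0` if `u - 1` is not a
unit. -/
noncomputable def projectedCayley {A : Type*} [Ring A] [Algebra ℂ A] (u p : A) : A :=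
  (-Complex.I) • (Ring.inverse (u - 1) * p * (u + 1))

section Algebraic

variable {A : Type*} [Ring A] [Algebra ℂ A] {u p : A}

theorem projectedCayley_mul_self (hp : IsIdempotentElem p) (hup : Commute u p) :
    projectedCayley u p * p = projectedCayley u p := by
  have absorb : p * (u + 1) * p = p * (u + 1) := by
    rw [mul_assoc, (hup.add_left (Commute.one_left p)).eq, ← mul_assoc, hp.eq]
  rw [projectedCayley, smul_mul_assoc, mul_assoc _ p, mul_assoc _ _ p, absorb]

theorem projectedCayley_eq_zero (hup : Commute u p) (h : u * p = -p) :
    projectedCayley u p = 0 := by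
  have annihilate : p * (u + 1) = 0 := by rw [mul_add, ← hup.eq, h, mul_one, neg_add_cancel]
  rw [projectedCayley, mul_assoc, annihilate, mul_zero, smul_zero]

end Algebraic

section Calculus

theorem hasSummableGeomSeries_of_finiteDimensional (𝕜 A : Type*) [NontriviallyNormedField 𝕜]
    [CompleteSpace 𝕜] [NormedRing A] [NormedAlgebra 𝕜 A] [FiniteDimensional 𝕜 A] :
    HasSummableGeomSeries A :=
  have := FiniteDimensional.complete 𝕜 A
  inferInstance

variable {𝕜 A : Type*} [NontriviallyNormedField 𝕜] [NormedRing A] [NormedAlgebra 𝕜 A]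

theorem differentiableAt_projectedCayley [HasSummableGeomSeries A] [Algebra ℂ A]
    {U P : 𝕜 → A} {x : 𝕜} (hU : DifferentiableAt 𝕜 U x)
    (hP : DifferentiableAt 𝕜 P x) (hu : IsUnit (U x - 1)) :
    DifferentiableAt 𝕜 (fun t => projectedCayley (U t) (P t)) x := by
  simp only [projectedCayley, Algebra.smul_def]
  exact ((((hU.sub_const 1).inverse hu).mul hP).mul (hU.add_const 1)).const_mul _

theorem deriv_mul_eq_deriv_of_eventuallyEq_mul {K P : 𝕜 → A} {x : 𝕜}
    (hK : DifferentiableAt 𝕜 K x) (hP : DifferentiableAt 𝕜 P x) (hx : K x = 0)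
    (hKP : K * P =ᶠ[𝓝 x] K) : deriv K x * P x = deriv K x :=
  calc
    deriv K x * P x = deriv K x * P x + K x * deriv P x := by rw [hx, zero_mul, add_zero]
    _ = deriv (K * P) x := (deriv_mul hK hP).symm
    _ = deriv K x := hKP.deriv_eq

theorem stmt9_general [HasSummableGeomSeries A] [Algebra ℂ A] {U P : 𝕜 → A} {x : 𝕜}
    (hU : DifferentiableAt 𝕜 U x) (hP : DifferentiableAt 𝕜 P x) (hu : IsUnit (U x - 1))
    (hyp : ∀ᶠ t in 𝓝 x, IsIdempotentElem (P t) ∧ Commute (U t) (P t))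
    (hx : U x * P x = -P x) {K : 𝕜 → A} (hK : ∀ t, K t = projectedCayley (U t) (P t)) :
    K x = 0 ∧ DifferentiableAt 𝕜 K x ∧ deriv K x * (1 - P x) = 0 := by
  obtain rfl : K = fun t => projectedCayley (U t) (P t) := funext hK
  have zero := projectedCayley_eq_zero hyp.self_of_nhds.2 hx
  have diff := differentiableAt_projectedCayley hU hP hu
  have absorb := hyp.mono fun t ht => projectedCayley_mul_self ht.1 ht.2
  refine ⟨zero, diff, ?_⟩
  rw [mul_sub, mul_one, deriv_mul_eq_deriv_of_eventuallyEq_mul diff hP zero absorb, sub_self]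

end Calculus

theorem stmt9 (d : ℕ) (U P : ℝ → Matrix (Fin d) (Fin d) ℂ)
    (hU : DifferentiableAt ℝ U 0) (hP : DifferentiableAt ℝ P 0)
    (hyp : ∀ᶠ ε in 𝓝 (0 : ℝ),
      ((U ε)ᴴ * U ε = 1 ∧ U ε * (U ε)ᴴ = 1) ∧
      P ε * P ε = P ε ∧ (P ε)ᴴ = P ε ∧
      U ε * P ε = P ε * U ε ∧ IsUnit (U ε - 1))
    (h0 : U 0 * P 0 = -(P 0))
    (K : ℝ → Matrix (Fin d) (Fin d) ℂ)
    (hK : ∀ ε : ℝ, K ε = (-Complex.I) • ((U ε - 1)⁻¹ * P ε * (U ε + 1))) :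
    K 0 = 0 ∧ DifferentiableAt ℝ K 0 ∧ P 0 * deriv K 0 * (1 - P 0) = 0 := by
  -- The row-sum norm makes the matrices a Banach algebra; its topology is, definitionally, that of
  -- the entrywise sup norm, so derivatives agree.
  let _ : NormedRing (Matrix (Fin d) (Fin d) ℂ) := Matrix.linftyOpNormedRing
  let _ : NormedAlgebra ℝ (Matrix (Fin d) (Fin d) ℂ) := Matrix.linftyOpNormedAlgebra
  have _ := hasSummableGeomSeries_of_finiteDimensional ℝ (Matrix (Fin d) (Fin d) ℂ)
  obtain ⟨zero, diff, corner⟩ := stmt9_general hU hP hyp.self_of_nhds.2.2.2.2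
    (hyp.mono fun _ h => ⟨h.2.1, h.2.2.2.1⟩) h0 (K := K) fun ε => by
      rw [hK, nonsing_inv_eq_ringInverse, projectedCayley]
  exact ⟨zero, diff, by rw [mul_assoc]; exact mul_eq_zero_of_right _ corner⟩
end

section
/- Let H be a Hermitian d×d complex matrix, G a positive definite d×d complex matrix, μ a nonzero real number, and set T := H + i·μ·G (so that T is invertible). Let S be a Hermitian m×m complex matrix and let B be a d×m complex matrix whose associated linear map is injective (B.mulVec c = 0 implies c = 0). Then the m×m matrix Bᴴ * T⁻¹ * B − S is invertible. -/
open Matrix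
open scoped ComplexOrder

/-!
Call a square matrix `A` skew-anisotropic if `x* A x` is self-adjoint only for `x = 0`. Such a
matrix has trivial kernel, and the property survives adjoints, congruence `A ↦ Bᴴ A B` by an
injective `B`, and subtraction of a Hermitian matrix. It also survives inversion, because
`A⁻¹ = (A⁻¹)ᴴ Aᴴ A⁻¹` is a congruence of `Aᴴ`. The matrix `T = H + iμG` is skew-anisotropic since
`x* T x` has imaginary part `μ x* G x`; hence so is `Bᴴ T⁻¹ B - S`, which is therefore invertible.
-/

variable {R K m n : Type*} [Fintype m] [Fintype n]

section Ring

variable [Ring R] [StarRing R]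

theorem star_star_dotProduct_mulVec (A : Matrix n n R) (x : n → R) :
    star (star x ⬝ᵥ A *ᵥ x) = star x ⬝ᵥ Aᴴ *ᵥ x := by
  rw [← star_dotProduct_star, star_star, star_mulVec, dotProduct_mulVec]

theorem isSelfAdjoint_star_dotProduct_mulVec {A : Matrix n n R} (hA : A.IsHermitian) (x : n → R) :
    IsSelfAdjoint (star x ⬝ᵥ A *ᵥ x) := by
  rw [isSelfAdjoint_iff, star_star_dotProduct_mulVec, hA.eq]

theorem star_dotProduct_conjTranspose_mul_mul_mulVec (A : Matrix n n R) (B : Matrix n m R)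
    (x : m → R) : star x ⬝ᵥ (Bᴴ * A * B) *ᵥ x = star (B *ᵥ x) ⬝ᵥ A *ᵥ (B *ᵥ x) := by
  rw [Matrix.mul_assoc, ← mulVec_mulVec, ← mulVec_mulVec, dotProduct_mulVec, star_mulVec]

/-- A square matrix `A` is skew-anisotropic if its skew-Hermitian part `A - Aᴴ` is anisotropic: the
form `x ↦ x* A x` takes no self-adjoint value at a nonzero vector. Over `ℂ` this expresses that the
imaginary part of `A` is positive or negative definite, without fixing the sign. -/
def SkewAnisotropic (A : Matrix n n R) : Prop :=
  ∀ ⦃x : n → R⦄, IsSelfAdjoint (star x ⬝ᵥ A *ᵥ x) → x = 0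

namespace SkewAnisotropic

variable {A : Matrix n n R}

theorem mulVec_injective (hA : SkewAnisotropic A) : Function.Injective A.mulVec := by
  intro x y hxy
  have hker : A *ᵥ (x - y) = 0 := by rw [mulVec_sub, sub_eq_zero.2 hxy]
  have hself : IsSelfAdjoint (star (x - y) ⬝ᵥ A *ᵥ (x - y)) := by
    rw [hker, dotProduct_zero]
    exact .zero R
  exact sub_eq_zero.1 (hA hself)

protected theorem conjTranspose (hA : SkewAnisotropic A) : SkewAnisotropic Aᴴ := fun x hx ↦
  hA <| by rwa [← IsSelfAdjoint.star_iff, star_star_dotProduct_mulVec]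

theorem conjTranspose_mul_mul_same (hA : SkewAnisotropic A) {B : Matrix n m R}
    (hB : Function.Injective B.mulVec) : SkewAnisotropic (Bᴴ * A * B) := by
  intro x hx
  rw [star_dotProduct_conjTranspose_mul_mul_mulVec] at hx
  exact hB ((hA hx).trans (mulVec_zero B).symm)

theorem sub_isHermitian (hA : SkewAnisotropic A) {S : Matrix n n R} (hS : S.IsHermitian) :
    SkewAnisotropic (A - S) := by
  intro x hx
  have hadd := hx.add (isSelfAdjoint_star_dotProduct_mulVec hS x)
  rw [← dotProduct_add, ← add_mulVec, sub_add_cancel] at hadd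
  exact hA hadd

end SkewAnisotropic

end Ring

theorem skewAnisotropic_add_smul [CommRing R] [NoZeroDivisors R] [StarRing R]
    {H G : Matrix n n R} (hH : H.IsHermitian) (hG : G.IsHermitian)
    (hG₀ : ∀ x ≠ 0, star x ⬝ᵥ G *ᵥ x ≠ 0) {c : R} (hc : ¬IsSelfAdjoint c) :
    SkewAnisotropic (H + c • G) := by
  intro x hx
  have hsub := hx.sub (isSelfAdjoint_star_dotProduct_mulVec hH x)
  rw [← dotProduct_sub, ← sub_mulVec, add_sub_cancel_left, smul_mulVec, dotProduct_smul,
    smul_eq_mul, isSelfAdjoint_iff, star_mul',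
    (isSelfAdjoint_star_dotProduct_mulVec hG x).star_eq] at hsub
  by_contra hx₀
  exact hc (mul_right_cancel₀ (hG₀ x hx₀) hsub)

section Field

variable [Field K] [StarRing K] [DecidableEq n]

namespace SkewAnisotropic

variable {A : Matrix n n K}

protected theorem isUnit (hA : SkewAnisotropic A) : IsUnit A :=
  mulVec_injective_iff_isUnit.1 hA.mulVec_injective

protected theorem inv (hA : SkewAnisotropic A) : SkewAnisotropic A⁻¹ := by
  have hdet : IsUnit A.det := (isUnit_iff_isUnit_det A).1 hA.isUnit
  have hcongr : A⁻¹ᴴ * Aᴴ * A⁻¹ = A⁻¹ := by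
    rw [← conjTranspose_mul, mul_nonsing_inv A hdet, conjTranspose_one, Matrix.one_mul]
  rw [← hcongr]
  exact hA.conjTranspose.conjTranspose_mul_mul_same
    (mulVec_injective_of_isUnit (isUnit_nonsing_inv_iff.2 hA.isUnit))

end SkewAnisotropic

theorem stmt11_general [DecidableEq m] {H G : Matrix n n K} (hH : H.IsHermitian)
    (hG : G.IsHermitian) (hG₀ : ∀ x ≠ 0, star x ⬝ᵥ G *ᵥ x ≠ 0) {c : K}
    (hc : ¬IsSelfAdjoint c) {S : Matrix m m K} (hS : S.IsHermitian) {B : Matrix n m K}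
    (hB : Function.Injective B.mulVec) : IsUnit (Bᴴ * (H + c • G)⁻¹ * B - S) :=
  have hT : SkewAnisotropic (H + c • G) := skewAnisotropic_add_smul hH hG hG₀ hc
  ((hT.inv.conjTranspose_mul_mul_same hB).sub_isHermitian hS).isUnit

end Field

theorem not_isSelfAdjoint_I_mul_ofReal {μ : ℝ} (hμ : μ ≠ 0) :
    ¬IsSelfAdjoint (Complex.I * (μ : ℂ)) := by
  rw [isSelfAdjoint_iff, Complex.star_def, Complex.conj_eq_iff_im]
  simpa using hμ

theorem stmt11 (d m : ℕ) (H G : Matrix (Fin d) (Fin d) ℂ)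
    (hH : H.IsHermitian) (hG : G.PosDef) (μ : ℝ) (hμ : μ ≠ 0)
    (S : Matrix (Fin m) (Fin m) ℂ) (hS : S.IsHermitian)
    (B : Matrix (Fin d) (Fin m) ℂ) (hB : ∀ c : Fin m → ℂ, B.mulVec c = 0 → c = 0) :
    IsUnit (Bᴴ * (H + (Complex.I * (μ : ℂ)) • G)⁻¹ * B - S) :=
  stmt11_general hH hG.isHermitian (fun _ hx ↦ (hG.dotProduct_mulVec_pos hx).ne')
    (not_isSelfAdjoint_I_mul_ofReal hμ) hS ((injective_iff_map_eq_zero B.mulVecLin).2 hB)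
end

section
/- Let k, m ∈ ℕ and index d₀×d₀ matrices by Fin k ⊕ Fin m. Let Q be a Hermitian k×k complex matrix, let Ψ be a unitary d₀×d₀ complex matrix, and let Π, Θ be diagonal d₀×d₀ matrices with real diagonal entries, with Π invertible. Let E := fromBlocks 1 0 0 0 (identity in the upper-left k×k block, zeros elsewhere), A₀ := (fromBlocks Q 0 0 1) * Ψᴴ + i·E * Ψᴴ * Θ, and B₀ := −E * Ψᴴ * Π. Then A₀ * Π⁻¹ * B₀ᴴ + i·B₀ * Π⁻¹ * Θ * Π⁻¹ * B₀ᴴ = −fromBlocks Q 0 0 0; in particular this matrix is Hermitian. -/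
open Matrix

/-!
Write `X = E Ψᴴ`. Since `Π` is Hermitian, `B₀ = -X Π` gives `B₀ Π⁻¹ = -X` and `Π⁻¹ B₀ᴴ = -Xᴴ`, so
the `Θ`-term of `A₀` contributes `-i X Θ Xᴴ`, which the second summand cancels. What survives is
`-(Q ⊕ 1) Ψᴴ Xᴴ = -(Q ⊕ 1) Ψᴴ Ψ E`, and `Ψᴴ Ψ = 1` leaves `-(Q ⊕ 0)`.
-/

section Cancellation

variable {R l m n : Type*} [CommRing R] [StarRing R] [Fintype n] [DecidableEq n]
  {P : Matrix n n R}

theorem inv_mul_conjTranspose_mul_of_isHermitian (hP : P.IsHermitian) (hPu : IsUnit P)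
    (X : Matrix l n R) : P⁻¹ * (X * P)ᴴ = Xᴴ := by
  rw [conjTranspose_mul, hP.eq,
    nonsing_inv_mul_cancel_left _ _ ((isUnit_iff_isUnit_det P).mp hPu)]

theorem mul_inv_mul_conjTranspose_add_smul_of_isHermitian (hP : P.IsHermitian) (hPu : IsUnit P)
    (c : R) (C X : Matrix l n R) (T : Matrix n n R) {A B : Matrix l n R}
    (hA : A = C + c • (X * T)) (hB : B = -(X * P)) :
    A * P⁻¹ * Bᴴ + c • (B * P⁻¹ * T * P⁻¹ * Bᴴ) = -(C * Xᴴ) := by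
  have hPB : P⁻¹ * Bᴴ = -Xᴴ := by
    rw [hB, conjTranspose_neg, Matrix.mul_neg,
      inv_mul_conjTranspose_mul_of_isHermitian hP hPu]
  have hBP : B * P⁻¹ = -X := by
    rw [hB, Matrix.neg_mul,
      mul_nonsing_inv_cancel_right _ _ ((isUnit_iff_isUnit_det P).mp hPu)]
  calc A * P⁻¹ * Bᴴ + c • (B * P⁻¹ * T * P⁻¹ * Bᴴ)
      = A * (P⁻¹ * Bᴴ) + c • (B * P⁻¹ * T * (P⁻¹ * Bᴴ)) := by simp only [Matrix.mul_assoc]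
    _ = -((C + c • (X * T)) * Xᴴ) + c • (X * T * Xᴴ) := by
      simp only [hPB, hBP, hA, Matrix.mul_neg, Matrix.neg_mul, neg_neg]
    _ = -(C * Xᴴ) := by rw [Matrix.add_mul, Matrix.smul_mul, neg_add, neg_add_cancel_right]

end Cancellation

theorem mul_conjTranspose_mul_conjTranspose_of_isometry {R l m n o : Type*} [Semiring R]
    [StarRing R] [Fintype m] [Fintype n] [DecidableEq m] {Ψ : Matrix n m R} (hΨ : Ψᴴ * Ψ = 1)
    (D : Matrix l m R) (F : Matrix o m R) : D * Ψᴴ * (F * Ψᴴ)ᴴ = D * Fᴴ := by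
  rw [conjTranspose_mul, conjTranspose_conjTranspose, Matrix.mul_assoc,
    ← Matrix.mul_assoc Ψᴴ, hΨ, Matrix.one_mul]

theorem fromBlocks_mul_conjTranspose_fromBlocks_one_zero {R k l m o : Type*} [Semiring R]
    [StarRing R] [Fintype k] [Fintype m] [DecidableEq k] (Q : Matrix l k R) (U : Matrix l m R)
    (V : Matrix o k R) (S : Matrix o m R) :
    fromBlocks Q U V S * (fromBlocks (1 : Matrix k k R) 0 0 (0 : Matrix m m R))ᴴ =
      fromBlocks Q 0 V 0 := by
  simp [fromBlocks_conjTranspose, fromBlocks_multiply]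

theorem stmt17_general {R k m n : Type*} [CommRing R] [StarRing R]
    [Fintype k] [Fintype m] [Fintype n] [DecidableEq k] [DecidableEq m] [DecidableEq n]
    (c : R) (Q : Matrix k k R) (U : Matrix k m R) (S : Matrix m m R)
    {Ψ : Matrix n (k ⊕ m) R} (hΨ : Ψᴴ * Ψ = 1)
    {P : Matrix n n R} (hP : P.IsHermitian) (hPu : IsUnit P) (T : Matrix n n R)
    {E : Matrix (k ⊕ m) (k ⊕ m) R} {A B : Matrix (k ⊕ m) n R}
    (hE : E = fromBlocks 1 0 0 0)
    (hA : A = fromBlocks Q U 0 S * Ψᴴ + c • (E * Ψᴴ * T)) (hB : B = -(E * Ψᴴ * P)) :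
    A * P⁻¹ * Bᴴ + c • (B * P⁻¹ * T * P⁻¹ * Bᴴ) = -fromBlocks Q 0 0 0 ∧
      ((A * P⁻¹ * Bᴴ + c • (B * P⁻¹ * T * P⁻¹ * Bᴴ)).IsHermitian ↔ Q.IsHermitian) := by
  have h : A * P⁻¹ * Bᴴ + c • (B * P⁻¹ * T * P⁻¹ * Bᴴ) = -fromBlocks Q 0 0 0 := by
    rw [mul_inv_mul_conjTranspose_add_smul_of_isHermitian hP hPu c _ _ T hA hB,
      mul_conjTranspose_mul_conjTranspose_of_isometry hΨ, hE,
      fromBlocks_mul_conjTranspose_fromBlocks_one_zero]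
  refine ⟨h, ?_⟩
  rw [h, isHermitian_neg_iff, isHermitian_fromBlocks_iff]
  simp

theorem stmt17 (k m : ℕ) (Q : Matrix (Fin k) (Fin k) ℂ) (hQ : Q.IsHermitian)
    (Ψ : Matrix (Fin k ⊕ Fin m) (Fin k ⊕ Fin m) ℂ)
    (hΨ : Ψᴴ * Ψ = 1 ∧ Ψ * Ψᴴ = 1)
    (pv θv : Fin k ⊕ Fin m → ℝ)
    (Pm Tm E A₀ B₀ : Matrix (Fin k ⊕ Fin m) (Fin k ⊕ Fin m) ℂ)
    (hPm : Pm = Matrix.diagonal fun i => (pv i : ℂ))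
    (hTm : Tm = Matrix.diagonal fun i => (θv i : ℂ))
    (hPinv : IsUnit Pm)
    (hE : E = Matrix.fromBlocks (1 : Matrix (Fin k) (Fin k) ℂ) 0 0 0)
    (hA : A₀ = Matrix.fromBlocks Q 0 0 (1 : Matrix (Fin m) (Fin m) ℂ) * Ψᴴ +
      Complex.I • (E * Ψᴴ * Tm))
    (hB : B₀ = -(E * Ψᴴ * Pm)) :
    A₀ * Pm⁻¹ * B₀ᴴ + Complex.I • (B₀ * Pm⁻¹ * Tm * Pm⁻¹ * B₀ᴴ) =
      -(Matrix.fromBlocks Q 0 0 0) ∧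
    (A₀ * Pm⁻¹ * B₀ᴴ + Complex.I • (B₀ * Pm⁻¹ * Tm * Pm⁻¹ * B₀ᴴ)).IsHermitian := by
  have hP : Pm.IsHermitian := hPm ▸ isHermitian_diagonal_iff.mpr fun i => Complex.conj_ofReal (pv i)
  exact (stmt17_general Complex.I Q 0 1 hΨ.1 hP hPinv Tm hE hA hB).imp_right fun h => h.mpr hQ
end
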